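/- Let n ≥ 2 and let u be a smooth function on a neighborhood of the closed unit ball B ⊂ ℝ^{n+1} which is harmonic in the interior of B (Δu = 0). Then ∫_B u·⟨∇u, ∇(|x|²)⟩ dx = ∫_B (1 − |x|²)·|∇u(x)|² dx ≥ 0. Consequently, if in addition u > 0 on B and −∫_B u·⟨∇u, ∇(|x|²)⟩ dx ≥ (2/(n−1))·∫_B |∇u|² dx, then u is constant. (This is the key step in the Frank–Lieb-style proof that the only positive local minimizers in Escobar's sharp Sobolev trace inequality are the constants, up to the conformal group.) -/

import Mathlib

open MeasureTheory Metric

noncomputable section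

local notation "⟪" x ", " y "⟫" => @inner ℝ _ _ x y

abbrev Euc (m : ℕ) : Type := EuclideanSpace ℝ (Fin m)

variable {m : ℕ}

def stdv (m : ℕ) (i : Fin m) : Euc m := EuclideanSpace.single i (1 : ℝ)

def grad (u : Euc m → ℝ) (x : Euc m) : Euc m := gradient u x

def hessVec (u : Euc m → ℝ) (x v : Euc m) : Euc m := fderiv ℝ (gradient u) x v

def hess (u : Euc m → ℝ) (x v w : Euc m) : ℝ := ⟪hessVec u x v, w⟫

def lap (u : Euc m → ℝ) (x : Euc m) : ℝ := ∑ i, hess u x (stdv m i) (stdv m i)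

def hessNormSq (u : Euc m → ℝ) (x : Euc m) : ℝ :=
  ∑ i, ∑ j, (hess u x (stdv m i) (stdv m j)) ^ 2

def divg (V : Euc m → Euc m) (x : Euc m) : ℝ :=
  ∑ i, fderiv ℝ (fun y => V y i) x (stdv m i)

def etaD (u : Euc m → ℝ) (x : Euc m) : ℝ := ⟪x, grad u x⟫

def tgrad (u : Euc m → ℝ) (x : Euc m) : Euc m := grad u x - etaD u x • x

def SmoothNearBall (u : Euc m → ℝ) : Prop :=
  ∃ U : Set (Euc m), IsOpen U ∧ closedBall (0 : Euc m) 1 ⊆ U ∧ ContDiffOn ℝ (⊤ : ℕ∞) u U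

/-- boundary Laplacian on the unit sphere `Sⁿ ⊂ ℝⁿ⁺¹` -/
def blap (n : ℕ) (u : Euc (n+1) → ℝ) (x : Euc (n+1)) : ℝ :=
  lap u x - (n : ℝ) * etaD u x - hess u x x x

def sigma1 (n : ℕ) (u : Euc (n+1) → ℝ) (x : Euc (n+1)) : ℝ :=
  -(((n:ℝ)-3)/4) * u x * lap u x - (((n:ℝ)+1)/4) * ‖grad u x‖^2

/-- the tensor `T₁(u)` as a bilinear form -/
def T1b (n : ℕ) (u : Euc (n+1) → ℝ) (x v w : Euc (n+1)) : ℝ :=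
  (sigma1 n u x + (1/2) * ‖grad u x‖^2) * ⟪v, w⟫
    + (((n:ℝ)-3)/4) * u x * hess u x v w
    - (((n:ℝ)+1)/4) * ⟪grad u x, v⟫ * ⟪grad u x, w⟫

/-- the tensor `T₁(u)` applied to a vector, i.e. the vector `T₁(u)(·,X)` -/
def T1app (n : ℕ) (u : Euc (n+1) → ℝ) (x X : Euc (n+1)) : Euc (n+1) :=
  (sigma1 n u x + (1/2) * ‖grad u x‖^2) • X
    + ((((n:ℝ)-3)/4) * u x) • hessVec u x X
    - ((((n:ℝ)+1)/4) * ⟪grad u x, X⟫) • grad u x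

def Hb (n : ℕ) (u : Euc (n+1) → ℝ) (x : Euc (n+1)) : ℝ :=
  etaD u x + (((n:ℝ)-3)/4) * u x

def L4 (n : ℕ) (u : Euc (n+1) → ℝ) (x : Euc (n+1)) : ℝ :=
  (((n:ℝ)-3)/8) * u x * (lap u x)^2 - (((n:ℝ)-3)/8) * u x * hessNormSq u x
    + (((n:ℝ)-1)/4) * ‖grad u x‖^2 * lap u x
    + (((n:ℝ)+1)/4) * hess u x (grad u x) (grad u x)

def B3 (n : ℕ) (u : Euc (n+1) → ℝ) (x : Euc (n+1)) : ℝ :=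
  Hb n u x * T1b n u x x x + ((n:ℝ)/3) * (Hb n u x)^3

def E2 (n : ℕ) (u : Euc (n+1) → ℝ) : ℝ :=
  (∫ x in closedBall (0 : Euc (n+1)) 1, u x * L4 n u x)
    + ∫ x in sphere (0 : Euc (n+1)) 1, u x * B3 n u x ∂μH[(n:ℝ)]

/-- total surface measure of the sphere `Sⁿ ⊂ ℝⁿ⁺¹` -/
def omegaN (n : ℕ) : ℝ := (μH[(n:ℝ)] (sphere (0 : Euc (n+1)) 1)).toReal

def memC1 (n : ℕ) (u : Euc (n+1) → ℝ) : Prop :=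
  SmoothNearBall u ∧ (∀ x ∈ closedBall (0 : Euc (n+1)) 1, 0 ≤ sigma1 n u x)
    ∧ ∀ x ∈ sphere (0 : Euc (n+1)) 1, 0 < Hb n u x

def memV (n : ℕ) (u : Euc (n+1) → ℝ) : Prop :=
  SmoothNearBall u ∧ (∀ x ∈ closedBall (0 : Euc (n+1)) 1, 0 < u x)
    ∧ (∫ x in sphere (0 : Euc (n+1)) 1, u x ^ ((4*(n:ℝ))/((n:ℝ)-3)) ∂μH[(n:ℝ)]) = omegaN n

/-- the normalized path `u_t` through `u` in the direction `v` -/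
def pathU (n : ℕ) (u v : Euc (n+1) → ℝ) (t : ℝ) : Euc (n+1) → ℝ :=
  fun x => omegaN n ^ (((n:ℝ)-3)/(4*(n:ℝ)))
    * ((∫ y in sphere (0 : Euc (n+1)) 1,
          |(1 + t * v y) * u y| ^ ((4*(n:ℝ))/((n:ℝ)-3)) ∂μH[(n:ℝ)]) ^ (((n:ℝ)-3)/(4*(n:ℝ))))⁻¹
    * ((1 + t * v x) * u x)

/-- `u` is a local minimizer of `E₂ : V → ℝ` -/
def IsLocalMinE2 (n : ℕ) (u : Euc (n+1) → ℝ) : Prop :=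
  ∀ v : Euc (n+1) → ℝ, SmoothNearBall v →
    IsLocalMin (fun t : ℝ => E2 n (pathU n u v t)) 0

/-- the polarization `L₄(w,u,u)` -/
def L4pol (n : ℕ) (u w : Euc (n+1) → ℝ) (x : Euc (n+1)) : ℝ :=
  (1/3) * deriv (fun t : ℝ => L4 n (fun y => u y + t * w y) x) 0

/-- the polarization `B₃(w,u,u)` -/
def B3pol (n : ℕ) (u w : Euc (n+1) → ℝ) (x : Euc (n+1)) : ℝ :=
  (1/3) * deriv (fun t : ℝ => B3 n (fun y => u y + t * w y) x) 0

/- ### four-dimensional (critical) objects -/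

def L43 (u v w : Euc 4 → ℝ) (x : Euc 4) : ℝ :=
  divg (fun y => ⟪grad u y, grad v y⟫ • grad w y
    + ⟪grad u y, grad w y⟫ • grad v y
    + ⟪grad v y, grad w y⟫ • grad u y) x

def L42 (u v : Euc 4 → ℝ) (x : Euc 4) : ℝ :=
  -(1/2) * (lap (fun y => ⟪grad u y, grad v y⟫) x
    - divg (fun y => lap u y • grad v y + lap v y • grad u y) x)

def B33 (u v w : Euc 4 → ℝ) (x : Euc 4) : ℝ :=
  -(⟪grad u x, grad v x⟫ * etaD w x + ⟪grad u x, grad w x⟫ * etaD v x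
    + ⟪grad v x, grad w x⟫ * etaD u x)

def B32 (u v : Euc 4 → ℝ) (x : Euc 4) : ℝ :=
  -(blap 3 u x * etaD v x + blap 3 v x * etaD u x)
    - ⟪tgrad u x, tgrad v x⟫ - 3 * etaD u x * etaD v x

def B31 (u : Euc 4 → ℝ) (x : Euc 4) : ℝ := -(blap 3 u x)

/-- total surface measure of `S³ ⊂ ℝ⁴` -/
def omega3 : ℝ := (μH[(3:ℝ)] (sphere (0 : Euc 4) 1)).toReal

def F2 (u : Euc 4 → ℝ) : ℝ :=
  -(1/4) * (∫ x in closedBall (0 : Euc 4) 1,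
      ((1/2) * ‖grad u x‖^4 + ‖grad u x‖^2 * lap u x))
    + ∫ x in sphere (0 : Euc 4) 1,
      ((1/4) * ‖tgrad u x‖^2 * etaD u x + (1/12) * (etaD u x)^3
        + (1/2) * ‖tgrad u x‖^2 + u x) ∂μH[(3:ℝ)]

def G2 (u : Euc 4 → ℝ) : ℝ :=
  F2 u - (omega3/3) * Real.log
    ((∫ x in sphere (0 : Euc 4) 1, Real.exp (3 * u x) ∂μH[(3:ℝ)]) / omega3)

def memC1crit (u : Euc 4 → ℝ) : Prop :=
  SmoothNearBall u ∧ (∀ x ∈ closedBall (0 : Euc 4) 1, 0 ≤ -lap u x - ‖grad u x‖^2)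
    ∧ ∀ x ∈ sphere (0 : Euc 4) 1, 0 < etaD u x + 1

/-- `u` is a local minimizer of `G₂ : C^∞(B) → ℝ` -/
def IsLocalMinG2 (u : Euc 4 → ℝ) : Prop :=
  ∀ v : Euc 4 → ℝ, SmoothNearBall v →
    IsLocalMin (fun t : ℝ => G2 (fun x => u x + t * v x)) 0

/-- the critical (four-dimensional) `σ₁` -/
def sigma1c (u : Euc 4 → ℝ) (x : Euc 4) : ℝ := -lap u x - ‖grad u x‖^2

/-- the critical (four-dimensional) `T₁(u)` as a bilinear form -/
def T1c (u : Euc 4 → ℝ) (x v w : Euc 4) : ℝ :=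
  hess u x v w - ⟪grad u x, v⟫ * ⟪grad u x, w⟫
    - (lap u x + (1/2) * ‖grad u x‖^2) * ⟪v, w⟫

/-!
On the ball of centre `c` and radius `R` put `w x = R ^ 2 - ‖x - c‖ ^ 2`, which vanishes on the
sphere and has gradient `-2 • (x - c)`. Integrating by parts against the field `u • ∇ u`, whose
divergence is `‖∇ u‖ ^ 2 + u * Δ u`, gives the identity. No boundary regularity is involved: `w`
extended by zero is Lipschitz with compact support, while a `C¹` function on the closed ball is
Lipschitz there and extends to a Lipschitz function on the whole space, so integration by parts for
Lipschitz functions applies. Since `w` is positive on the open ball, the weighted energy of `u`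
vanishes only if `∇ u` does, and then `u` is constant.
-/

section NormedSpace

open Set
open scoped Topology NNReal

lemma integrableOn_ball_of_continuousOn_closedBall {X F : Type*} [MetricSpace X]
    [ProperSpace X] [MeasurableSpace X] [OpensMeasurableSpace X] [NormedAddCommGroup F]
    (μ : Measure X) [IsFiniteMeasureOnCompacts μ] {c : X} {R : ℝ} {f : X → F}
    (hf : ContinuousOn f (closedBall c R)) : IntegrableOn f (ball c R) μ :=
  (hf.integrableOn_compact (isCompact_closedBall c R)).mono_set ball_subset_closedBall

lemma sq_sub_norm_sub_sq_pos {G : Type*} [SeminormedAddCommGroup G] {c x : G} {R : ℝ}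
    (hx : x ∈ ball c R) : 0 < R ^ 2 - ‖x - c‖ ^ 2 :=
  sub_pos.2 (pow_lt_pow_left₀ (mem_ball_iff_norm.1 hx) (norm_nonneg _) two_ne_zero)

lemma lipschitzWith_indicator_ball_sq_sub_norm_sub_sq {G : Type*} [SeminormedAddCommGroup G]
    (c : G) {R : ℝ} (hR : 0 ≤ R) :
    LipschitzWith (2 * R.toNNReal) ((ball c R).indicator fun x => R ^ 2 - ‖x - c‖ ^ 2) := by
  have heq : (ball c R).indicator (fun x => R ^ 2 - ‖x - c‖ ^ 2)
      = fun x => R ^ 2 - min ‖x - c‖ R ^ 2 := by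
    ext x
    by_cases hx : ‖x - c‖ < R
    · rw [indicator_of_mem (mem_ball_iff_norm.2 hx), min_eq_left hx.le]
    · rw [indicator_of_notMem (mt mem_ball_iff_norm.1 hx), min_eq_right (not_lt.1 hx), sub_self]
  have hmin : LipschitzWith 1 fun x => min ‖x - c‖ R := by
    simpa only [dist_eq_norm] using (LipschitzWith.dist_left c).min_const R
  have hnonneg : ∀ x, 0 ≤ min ‖x - c‖ R := fun x => le_min (norm_nonneg _) hR
  have hle : ∀ x, min ‖x - c‖ R ≤ R := fun x => min_le_right _ _
  rw [heq]
  refine LipschitzWith.of_dist_le_mul fun x y => ?_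
  calc dist (R ^ 2 - min ‖x - c‖ R ^ 2) (R ^ 2 - min ‖y - c‖ R ^ 2)
      = (min ‖x - c‖ R + min ‖y - c‖ R) * dist (min ‖x - c‖ R) (min ‖y - c‖ R) := by
        rw [dist_sub_left, Real.dist_eq, Real.dist_eq, sq_sub_sq, abs_mul,
          abs_of_nonneg (add_nonneg (hnonneg x) (hnonneg y))]
    _ ≤ 2 * R * dist x y := by
        gcongr
        · linarith [hle x, hle y]
        · simpa only [NNReal.coe_one, one_mul] using hmin.dist_le_mul x y
    _ = (2 * R.toNNReal : ℝ≥0) * dist x y := by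
        rw [NNReal.coe_mul, NNReal.coe_ofNat, Real.coe_toNNReal R hR]

variable {E : Type*} [NormedAddCommGroup E] [NormedSpace ℝ E]

lemma lineDeriv_indicator_of_notMem_frontier {F : Type*} [NormedAddCommGroup F] [NormedSpace ℝ F]
    {s : Set E} {x : E} (hx : x ∉ frontier s) (f : E → F) (w : E) :
    lineDeriv ℝ (s.indicator f) x w = s.indicator (fun y => lineDeriv ℝ f y w) x := by
  by_cases hxs : x ∈ s
  · have hs : s ∈ 𝓝 x := mem_interior_iff_mem_nhds.1 (by_contra fun h => hx ⟨subset_closure hxs, h⟩)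
    rw [indicator_of_mem hxs]
    exact (eqOn_indicator.eventuallyEq_of_mem hs).lineDeriv_eq
  · have hs : sᶜ ∈ 𝓝 x := by
      rw [← mem_interior_iff_mem_nhds, interior_compl]
      exact fun h => hx ⟨h, fun h' => hxs (interior_subset h')⟩
    have hzero : s.indicator f =ᶠ[𝓝 x] fun _ => 0 := eqOn_indicator'.eventuallyEq_of_mem hs
    rw [indicator_of_notMem hxs, hzero.lineDeriv_eq]
    exact deriv_const _ _

lemma apply_eq_of_mem_closure_of_fderiv_eq_zero {F : Type*} [NormedAddCommGroup F]
    [NormedSpace ℝ F] {s : Set E} (hs : IsOpen s) (hs' : IsPreconnected s) {f : E → F}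
    (hf : DiffContOnCl ℝ f s) (hf' : ∀ x ∈ s, fderiv ℝ f x = 0) {x y : E} (hx : x ∈ closure s)
    (hy : y ∈ closure s) : f x = f y := by
  obtain ⟨a, ha⟩ := hs.exists_is_const_of_fderiv_eq_zero hs' hf.differentiableOn hf'
  have hclosure : EqOn f (fun _ => a) (closure s) :=
    EqOn.of_subset_closure ha hf.continuousOn continuousOn_const subset_closure subset_rfl
  rw [hclosure hx, hclosure hy]

/-- The divergence of a vector field, defined without coordinates as the trace of its derivative;
in infinite dimension the trace, hence the divergence, has the junk value `0`. -/
def divergence (V : E → E) (x : E) : ℝ := LinearMap.trace ℝ E (fderiv ℝ V x)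

variable [FiniteDimensional ℝ E]

lemma divergence_smul {f : E → ℝ} {V : E → E} {x : E} (hf : DifferentiableAt ℝ f x)
    (hV : DifferentiableAt ℝ V x) :
    divergence (fun y => f y • V y) x = f x * divergence V x + fderiv ℝ f x (V x) := by
  simp only [divergence, fderiv_fun_smul hf hV]
  rw [ContinuousLinearMap.toLinearMap_add, map_add, ContinuousLinearMap.toLinearMap_smul, map_smul,
    smul_eq_mul]
  congr 1
  exact LinearMap.trace_smulRight _ _

variable [MeasurableSpace E] [BorelSpace E] (μ : Measure E) [μ.IsAddHaarMeasure]

lemma setIntegral_closedBall_eq_setIntegral_ball {F : Type*} [NormedAddCommGroup F]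
    [NormedSpace ℝ F] (c : E) {R : ℝ} (hR : R ≠ 0) (f : E → F) :
    ∫ x in closedBall c R, f x ∂μ = ∫ x in ball c R, f x ∂μ := by
  rw [← closure_ball c hR]
  exact setIntegral_congr_set
    (closure_ae_eq_of_null_frontier ((convex_ball c R).addHaar_frontier μ))

lemma setIntegral_lineDeriv_mul_eq {s : Set E} (hs : IsOpen s) (hb : Bornology.IsBounded s)
    (hμ : μ (frontier s) = 0) {f g : E → ℝ} {C D : ℝ≥0} (hf : LipschitzOnWith C f s)
    (hg : LipschitzWith D (s.indicator g)) (w : E) :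
    ∫ x in s, lineDeriv ℝ f x w * g x ∂μ = ∫ x in s, lineDeriv ℝ g x (-w) * f x ∂μ := by
  obtain ⟨F, hF, hfF⟩ := hf.extend_real
  have hsupp : HasCompactSupport (s.indicator g) :=
    HasCompactSupport.intro hb.isCompact_closure fun _ hx =>
      indicator_of_notMem (fun h => hx (subset_closure h)) g
  have hderiv : ∀ x ∈ s, lineDeriv ℝ F x w = lineDeriv ℝ f x w := fun x hx =>
    (hfF.symm.eventuallyEq_of_mem (hs.mem_nhds hx)).lineDeriv_eq
  calc ∫ x in s, lineDeriv ℝ f x w * g x ∂μ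
      = ∫ x in s, lineDeriv ℝ F x w * g x ∂μ :=
        setIntegral_congr_fun hs.measurableSet fun x hx => by simp only [hderiv x hx]
    _ = ∫ x, lineDeriv ℝ F x w * s.indicator g x ∂μ := by
        simp only [← integral_indicator hs.measurableSet, indicator_mul_right s (lineDeriv ℝ F · w)]
    _ = ∫ x, lineDeriv ℝ (s.indicator g) x (-w) * F x ∂μ :=
        hF.integral_lineDeriv_mul_eq hg hsupp w
    _ = ∫ x, s.indicator (fun y => lineDeriv ℝ g y (-w)) x * F x ∂μ := by
        refine integral_congr_ae ?_
        filter_upwards [measure_eq_zero_iff_ae_notMem.1 hμ] with x hx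
        rw [lineDeriv_indicator_of_notMem_frontier hx]
    _ = ∫ x in s, lineDeriv ℝ g x (-w) * F x ∂μ := by
        simp only [← integral_indicator hs.measurableSet, ← indicator_mul_left]
    _ = ∫ x in s, lineDeriv ℝ g x (-w) * f x ∂μ :=
        setIntegral_congr_fun hs.measurableSet fun x hx => by simp only [hfF hx]

end NormedSpace

section InnerProductSpace

open Laplacian Set
open scoped Gradient NNReal

variable {E : Type*} [NormedAddCommGroup E] [InnerProductSpace ℝ E]

lemma lineDeriv_sq_sub_norm_sub_sq (R : ℝ) (c x w : E) :
    lineDeriv ℝ (fun y => R ^ 2 - ‖y - c‖ ^ 2) x w = -(2 * ⟪x - c, w⟫) := by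
  have h : HasFDerivAt (fun y => R ^ 2 - ‖y - c‖ ^ 2) (-(2 • innerSL ℝ (x - c))) x :=
    ((hasFDerivAt_id x).sub_const c).norm_sq.const_sub (R ^ 2)
  rw [(h.hasLineDerivAt w).lineDeriv]
  simp only [neg_apply, smul_apply, innerSL_apply_apply, nsmul_eq_mul, Nat.cast_ofNat]

lemma divergence_eq_sum_inner {ι : Type*} [Fintype ι] (b : OrthonormalBasis ι ℝ E)
    (V : E → E) (x : E) : divergence V x = ∑ i, ⟪b i, fderiv ℝ V x (b i)⟫ :=
  LinearMap.trace_eq_sum_inner _ b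

lemma contDiffAt_gradient [CompleteSpace E] {u : E → ℝ} {x : E} {n : WithTop ℕ∞}
    (hu : ContDiffAt ℝ (n + 1) u x) : ContDiffAt ℝ n (∇ u) x :=
  (InnerProductSpace.toDual ℝ E).symm.contDiff.contDiffAt.comp x (hu.fderiv_right le_rfl)

variable [FiniteDimensional ℝ E]

lemma divergence_gradient (u : E → ℝ) (x : E) : divergence (∇ u) x = Δ u x := by
  have hfderiv : fderiv ℝ (∇ u) x =
      (InnerProductSpace.toDual ℝ E).symm.toContinuousLinearEquiv.toContinuousLinearMap ∘L
        fderiv ℝ (fderiv ℝ u) x :=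
    (InnerProductSpace.toDual ℝ E).symm.comp_fderiv
  rw [divergence_eq_sum_inner (stdOrthonormalBasis ℝ E),
    InnerProductSpace.laplacian_eq_iteratedFDeriv_stdOrthonormalBasis]
  refine Finset.sum_congr rfl fun i _ => ?_
  rw [iteratedFDeriv_two_apply, hfderiv, real_inner_comm]
  exact InnerProductSpace.toDual_symm_apply

lemma divergence_smul_gradient {u : E → ℝ} {x : E} (hu : ContDiffAt ℝ 2 u x) :
    divergence (fun y => u y • ∇ u y) x = ‖∇ u x‖ ^ 2 + u x * Δ u x := by
  have hgrad : ContDiffAt ℝ 1 (∇ u) x := contDiffAt_gradient hu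
  rw [divergence_smul (hu.differentiableAt two_ne_zero) (hgrad.differentiableAt one_ne_zero),
    divergence_gradient, ← inner_gradient_left, real_inner_self_eq_norm_sq, add_comm]

variable [MeasurableSpace E] [BorelSpace E] (μ : Measure E) [μ.IsAddHaarMeasure]

lemma setIntegral_ball_mul_lineDeriv (c : E) {R : ℝ} (hR : 0 ≤ R) {f : E → ℝ} {C : ℝ≥0}
    (hf : LipschitzOnWith C f (ball c R)) (w : E) :
    ∫ x in ball c R, (R ^ 2 - ‖x - c‖ ^ 2) * lineDeriv ℝ f x w ∂μ
      = ∫ x in ball c R, 2 * ⟪x - c, w⟫ * f x ∂μ := by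
  simpa only [lineDeriv_sq_sub_norm_sub_sq, inner_neg_right, mul_neg, neg_neg,
    mul_comm (lineDeriv _ _ _ _)]
    using setIntegral_lineDeriv_mul_eq μ isOpen_ball isBounded_ball
      ((convex_ball c R).addHaar_frontier μ) hf
      (lipschitzWith_indicator_ball_sq_sub_norm_sub_sq c hR) w

lemma setIntegral_ball_mul_inner_fderiv {c : E} {R : ℝ} (hR : 0 ≤ R) {V : E → E}
    (hV : ∀ x ∈ closedBall c R, ContDiffAt ℝ 1 V x) (v w : E) :
    ∫ x in ball c R, (R ^ 2 - ‖x - c‖ ^ 2) * ⟪v, fderiv ℝ V x w⟫ ∂μ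
      = ∫ x in ball c R, 2 * ⟪x - c, w⟫ * ⟪v, V x⟫ ∂μ := by
  obtain ⟨C, hC⟩ : ∃ C, LipschitzOnWith C (fun y => ⟪v, V y⟫) (closedBall c R) := by
    refine LocallyLipschitzOn.exists_lipschitzOnWith_of_compact (isCompact_closedBall c R)
      fun x hx => ?_
    obtain ⟨C, t, ht, hC⟩ := (contDiffAt_const.inner ℝ (hV x hx)).exists_lipschitzOnWith
    exact ⟨C, t, mem_nhdsWithin_of_mem_nhds ht, hC⟩
  have hderiv : ∀ x ∈ ball c R, lineDeriv ℝ (fun y => ⟪v, V y⟫) x w = ⟪v, fderiv ℝ V x w⟫ :=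
    fun x hx => by
      have hVx := (hV x (ball_subset_closedBall hx)).differentiableAt one_ne_zero
      exact (((innerSL ℝ v).hasFDerivAt.comp x hVx.hasFDerivAt).hasLineDerivAt w).lineDeriv
  rw [← setIntegral_ball_mul_lineDeriv μ c hR (hC.mono ball_subset_closedBall)]
  exact setIntegral_congr_fun measurableSet_ball fun x hx => by simp only [hderiv x hx]

lemma setIntegral_ball_mul_divergence {c : E} {R : ℝ} (hR : 0 ≤ R) {V : E → E}
    (hV : ∀ x ∈ closedBall c R, ContDiffAt ℝ 1 V x) :
    ∫ x in ball c R, (R ^ 2 - ‖x - c‖ ^ 2) * divergence V x ∂μ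
      = ∫ x in ball c R, ⟪V x, (2 : ℝ) • (x - c)⟫ ∂μ := by
  set b := stdOrthonormalBasis ℝ E
  have hcont : ContinuousOn V (closedBall c R) := fun x hx =>
    (hV x hx).continuousAt.continuousWithinAt
  have hcont_fderiv : ContinuousOn (fderiv ℝ V) (closedBall c R) := fun x hx =>
    ((hV x hx).fderiv_right (m := 0) le_rfl).continuousAt.continuousWithinAt
  calc ∫ x in ball c R, (R ^ 2 - ‖x - c‖ ^ 2) * divergence V x ∂μ
      = ∑ i, ∫ x in ball c R, (R ^ 2 - ‖x - c‖ ^ 2) * ⟪b i, fderiv ℝ V x (b i)⟫ ∂μ := by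
        rw [← integral_finsetSum _ fun i _ =>
          integrableOn_ball_of_continuousOn_closedBall μ (by fun_prop)]
        simp only [divergence_eq_sum_inner b, Finset.mul_sum]
    _ = ∑ i, ∫ x in ball c R, 2 * ⟪x - c, b i⟫ * ⟪b i, V x⟫ ∂μ :=
        Finset.sum_congr rfl fun i _ => setIntegral_ball_mul_inner_fderiv μ hR hV (b i) (b i)
    _ = ∫ x in ball c R, ⟪V x, (2 : ℝ) • (x - c)⟫ ∂μ := by
        rw [← integral_finsetSum _ fun i _ =>
          integrableOn_ball_of_continuousOn_closedBall μ (by fun_prop)]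
        refine integral_congr_ae (ae_of_all _ fun x => ?_)
        simp only [mul_assoc, ← Finset.mul_sum, b.sum_inner_mul_inner]
        rw [inner_smul_right, real_inner_comm]

lemma setIntegral_ball_mul_inner_gradient {c : E} {R : ℝ} (hR : 0 ≤ R) {u : E → ℝ}
    (hu : ∀ x ∈ closedBall c R, ContDiffAt ℝ 2 u x) :
    ∫ x in ball c R, u x * ⟪∇ u x, (2 : ℝ) • (x - c)⟫ ∂μ
      = ∫ x in ball c R, (R ^ 2 - ‖x - c‖ ^ 2) * (‖∇ u x‖ ^ 2 + u x * Δ u x) ∂μ := by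
  have hV : ∀ x ∈ closedBall c R, ContDiffAt ℝ 1 (fun y => u y • ∇ u y) x := fun x hx =>
    ((hu x hx).of_le one_le_two).smul (contDiffAt_gradient (hu x hx))
  calc ∫ x in ball c R, u x * ⟪∇ u x, (2 : ℝ) • (x - c)⟫ ∂μ
      = ∫ x in ball c R, ⟪u x • ∇ u x, (2 : ℝ) • (x - c)⟫ ∂μ := by
        simp only [real_inner_smul_left]
    _ = ∫ x in ball c R, (R ^ 2 - ‖x - c‖ ^ 2) * divergence (fun y => u y • ∇ u y) x ∂μ :=
        (setIntegral_ball_mul_divergence μ hR hV).symm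
    _ = ∫ x in ball c R, (R ^ 2 - ‖x - c‖ ^ 2) * (‖∇ u x‖ ^ 2 + u x * Δ u x) ∂μ :=
        setIntegral_congr_fun measurableSet_ball fun x hx => by
          simp only [divergence_smul_gradient (hu x (ball_subset_closedBall hx))]

lemma gradient_eq_zero_of_setIntegral_ball_nonpos {c : E} {R : ℝ} {u : E → ℝ}
    (hu : ∀ x ∈ closedBall c R, ContDiffAt ℝ 1 u x)
    (hint : ∫ x in ball c R, (R ^ 2 - ‖x - c‖ ^ 2) * ‖∇ u x‖ ^ 2 ∂μ ≤ 0) :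
    ∀ x ∈ ball c R, ∇ u x = 0 := by
  set g : E → ℝ := fun x => (R ^ 2 - ‖x - c‖ ^ 2) * ‖∇ u x‖ ^ 2
  have hgrad : ContinuousOn (∇ u) (closedBall c R) := fun x hx =>
    (contDiffAt_gradient (n := 0) (hu x hx)).continuousAt.continuousWithinAt
  have hcont : ContinuousOn g (closedBall c R) := by fun_prop
  have hnonneg : 0 ≤ᵐ[μ.restrict (ball c R)] g :=
    ae_restrict_of_forall_mem measurableSet_ball fun x hx =>
      mul_nonneg (sq_sub_norm_sub_sq_pos hx).le (sq_nonneg _)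
  have hae : g =ᵐ[μ.restrict (ball c R)] fun _ => 0 :=
    (setIntegral_eq_zero_iff_of_nonneg_ae hnonneg
      (integrableOn_ball_of_continuousOn_closedBall μ hcont)).1
      (hint.antisymm (integral_nonneg_of_ae hnonneg))
  have hzero : EqOn g (fun _ => 0) (ball c R) :=
    Measure.eqOn_open_of_ae_eq hae isOpen_ball (hcont.mono ball_subset_closedBall)
      continuousOn_const
  intro x hx
  exact norm_eq_zero.1 (pow_eq_zero_iff two_ne_zero |>.1
    ((mul_eq_zero.1 (hzero hx)).resolve_left (sq_sub_norm_sub_sq_pos hx).ne'))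

theorem statement12_general {c : E} {R : ℝ} (hR : 0 < R) {u : E → ℝ}
    (hu : ∀ x ∈ closedBall c R, ContDiffAt ℝ 2 u x) (hharm : ∀ x ∈ ball c R, Δ u x = 0) :
    (∫ x in closedBall c R, u x * ⟪∇ u x, (2 : ℝ) • (x - c)⟫ ∂μ
        = ∫ x in closedBall c R, (R ^ 2 - ‖x - c‖ ^ 2) * ‖∇ u x‖ ^ 2 ∂μ)
      ∧ 0 ≤ ∫ x in closedBall c R, (R ^ 2 - ‖x - c‖ ^ 2) * ‖∇ u x‖ ^ 2 ∂μ
      ∧ (∫ x in closedBall c R, u x * ⟪∇ u x, (2 : ℝ) • (x - c)⟫ ∂μ ≤ 0 →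
          ∀ x ∈ closedBall c R, ∀ y ∈ closedBall c R, u x = u y) := by
  have hC1 : ∀ x ∈ closedBall c R, ContDiffAt ℝ 1 u x := fun x hx => (hu x hx).of_le one_le_two
  have hidentity : ∫ x in ball c R, u x * ⟪∇ u x, (2 : ℝ) • (x - c)⟫ ∂μ
      = ∫ x in ball c R, (R ^ 2 - ‖x - c‖ ^ 2) * ‖∇ u x‖ ^ 2 ∂μ := by
    rw [setIntegral_ball_mul_inner_gradient μ hR.le hu]
    exact setIntegral_congr_fun measurableSet_ball fun x hx => by
      simp only [hharm x hx, mul_zero, add_zero]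
  simp only [setIntegral_closedBall_eq_setIntegral_ball μ c hR.ne', hidentity]
  refine ⟨trivial, setIntegral_nonneg measurableSet_ball fun x hx =>
    mul_nonneg (sq_sub_norm_sub_sq_pos hx).le (sq_nonneg _), fun hint x hx y hy => ?_⟩
  have hgrad := gradient_eq_zero_of_setIntegral_ball_nonpos μ hC1 hint
  have hdiff : DiffContOnCl ℝ u (ball c R) := DifferentiableOn.diffContOnCl <| by
    rw [closure_ball c hR.ne']
    exact fun z hz => ((hC1 z hz).differentiableAt one_ne_zero).differentiableWithinAt
  rw [← closure_ball c hR.ne'] at hx hy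
  refine apply_eq_of_mem_closure_of_fderiv_eq_zero isOpen_ball (convex_ball c R).isPreconnected
    hdiff (fun z hz => ?_) hx hy
  ext v
  rw [← inner_gradient_left, hgrad z hz, inner_zero_left, zero_apply]

end InnerProductSpace

lemma lap_eq_laplacian (u : Euc m → ℝ) (x : Euc m) : lap u x = Laplacian.laplacian u x := by
  rw [← divergence_gradient, divergence_eq_sum_inner (EuclideanSpace.basisFun (Fin m) ℝ)]
  refine Finset.sum_congr rfl fun i _ => ?_
  rw [EuclideanSpace.basisFun_apply, real_inner_comm]
  rfl

lemma SmoothNearBall.contDiffAt {u : Euc m → ℝ} (hu : SmoothNearBall u) {x : Euc m}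
    (hx : x ∈ closedBall (0 : Euc m) 1) : ContDiffAt ℝ (⊤ : ℕ∞) u x := by
  obtain ⟨U, hU, hball, hsmooth⟩ := hu
  exact hsmooth.contDiffAt (hU.mem_nhds (hball hx))

/-- the key step in the Frank--Lieb proof of Escobar's inequality. -/
theorem statement12 (n : ℕ) (hn : 2 ≤ n) (u : Euc (n+1) → ℝ) (hu : SmoothNearBall u)
    (hharm : ∀ x ∈ ball (0 : Euc (n+1)) 1, lap u x = 0) :
    ((∫ x in closedBall (0 : Euc (n+1)) 1, u x * ⟪grad u x, (2:ℝ) • x⟫)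
        = ∫ x in closedBall (0 : Euc (n+1)) 1, (1 - ‖x‖^2) * ‖grad u x‖^2)
      ∧ (0 ≤ ∫ x in closedBall (0 : Euc (n+1)) 1, (1 - ‖x‖^2) * ‖grad u x‖^2)
      ∧ ((∀ x ∈ closedBall (0 : Euc (n+1)) 1, 0 < u x) →
          (2/((n:ℝ)-1)) * (∫ x in closedBall (0 : Euc (n+1)) 1, ‖grad u x‖^2)
              ≤ -(∫ x in closedBall (0 : Euc (n+1)) 1, u x * ⟪grad u x, (2:ℝ) • x⟫) →
          ∀ x ∈ closedBall (0 : Euc (n+1)) 1, ∀ y ∈ closedBall (0 : Euc (n+1)) 1,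
            u x = u y) := by
  have hcoeff : (0 : ℝ) ≤ 2 / (n - 1) := div_nonneg zero_le_two (by rify at hn; linarith)
  have hC2 : ∀ x ∈ closedBall (0 : Euc (n+1)) 1, ContDiffAt ℝ 2 u x := fun x hx =>
    (hu.contDiffAt hx).of_le ENat.LEInfty.out
  obtain ⟨hidentity, hnonneg, hconst⟩ :=
    statement12_general volume zero_lt_one hC2 (by simpa only [lap_eq_laplacian] using hharm)
  simp only [sub_zero, one_pow] at hidentity hnonneg hconst
  exact ⟨hidentity, hnonneg, fun _ hint => hconst <| neg_nonneg.1 <|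
    (mul_nonneg hcoeff <| integral_nonneg fun _ => sq_nonneg _).trans hint⟩
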